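/- arXiv:2605.24472 — 2 statements merged into one kernel-verified Lean document; each statement's English description precedes it below -/
import Mathlib

section
/- Let n ≥ 2 and let μ₁ be the measure on ℝⁿ with density e^{-|x|} with respect to the Lebesgue measure. Then for every α > 0 there exist convex bodies K, L in ℝⁿ containing the origin and λ ∈ (0,1) such that μ₁(λK + (1-λ)L)^α < λ·μ₁(K)^α + (1-λ)·μ₁(L)^α. In particular, no positive exponent α makes the Brunn–Minkowski inequality with exponent α hold for μ₁ on the class of convex bodies containing the origin. -/
open MeasureTheory Real Set Pointwise

lemma aux_num (a : ℝ) (ha : 0 < a) : ∃ t : ℝ, 0 < t ∧ t ≤ 1/4 ∧ ∀ A B C : ℝ, 0 < A → 0 ≤ B →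
    B ≤ exp (t/2) * A →
    exp (-t^3) * (exp t * A - (exp t - exp (-t)) * (t^2 * (exp 2 * A))) ≤ C →
    B ^ a < (1/2) * A ^ a + (1 - 1/2) * C ^ a := by
  obtain ⟨t, ht0, ht1, ht2, ht3⟩ : ∃ t : ℝ, 0 < t ∧ t ≤ 1/4 ∧ a * t ≤ 1 ∧ 1000 * t ≤ a := by
    refine ⟨min (1/4) (min (1/a) (a/1000)), by positivity, min_le_left _ _, ?_, ?_⟩
    · have : min (1/4) (min (1/a) (a/1000)) ≤ 1/a := (min_le_right _ _).trans (min_le_left _ _)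
      calc _ ≤ a * (1/a) := by gcongr
        _ = 1 := by field_simp
    · have : min (1/4) (min (1/a) (a/1000)) ≤ a/1000 := (min_le_right _ _).trans (min_le_right _ _)
      linarith
  refine ⟨t, ht0, ht1, ?_⟩
  intro A B C hA hB hBA hC
  have he2 : exp 2 ≤ 8 := by
    have h1 := exp_one_lt_d9
    have : exp 2 = exp 1 * exp 1 := by rw [← exp_add]; norm_num
    rw [this]; nlinarith [exp_pos 1]
  have ht3' : t^3 ≤ 1/64 := by
    calc t^3 ≤ (1/4)^3 := by gcongr
      _ = _ := by norm_num
  have h1 : exp t * exp (-32*t^3) ≤ exp t - (exp t - exp (-t)) * (t^2 * exp 2) := by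
    have e1 : exp (-t) = exp t * exp (-2*t) := by rw [← exp_add]; ring_nf
    have e2 : 1 - 2*t ≤ exp (-2*t) := by linarith [add_one_le_exp (-2*t)]
    have e3 : exp (-32*t^3) ≤ 1 - 16*t^3 := by
      have h := add_one_le_exp (32*t^3)
      have : exp (-32*t^3) * exp (32*t^3) = 1 := by rw [← exp_add]; ring_nf; simp
      have h0 : 0 < t^3 := by positivity
      have hp := exp_pos (-32*t^3)
      have : exp (-32*t^3) * (32*t^3+1) ≤ 1 := by nlinarith
      by_contra hc
      push Not at hc
      nlinarith
    have e4 : (1 - exp (-2*t)) * (t^2 * exp 2) ≤ 2*t * (t^2*8) := by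
      have : exp (-2*t) ≤ 1 := by rw [exp_le_one_iff]; linarith
      gcongr
      linarith
    rw [e1]
    have := exp_pos t
    calc exp t * exp (-32*t^3) ≤ exp t * (1 - (1 - exp (-2*t)) * (t^2 * exp 2)) := by
          gcongr; nlinarith
      _ = _ := by ring
  have h2 : exp (t - 33*t^3) * A ≤ C := by
    refine le_trans ?_ hC
    calc exp (t - 33*t^3) * A = exp (-t^3) * (exp t * exp (-32*t^3)) * A := by
          rw [← exp_add, ← exp_add]; ring_nf
      _ ≤ exp (-t^3) * (exp t - (exp t - exp (-t)) * (t^2 * exp 2)) * A := by gcongr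
      _ = _ := by ring
  have h3 : exp (a*t - 33*a*t^3) * A^a ≤ C^a := by
    calc _ = (exp (t - 33*t^3) * A)^a := by
          rw [mul_rpow (exp_pos _).le hA.le, ← exp_mul]; ring_nf
      _ ≤ _ := by gcongr
  have h4 : B^a ≤ exp (a*t/2) * A^a := by
    calc B^a ≤ (exp (t/2) * A)^a := by gcongr
      _ = _ := by rw [mul_rpow (exp_pos _).le hA.le, ← exp_mul]; ring_nf
  have hAa : 0 < A^a := by positivity
  have h5 : exp (a*t) * (1 - 33*a*t^3) ≤ exp (a*t - 33*a*t^3) := by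
    rw [sub_eq_add_neg (a*t), exp_add]
    gcongr
    linarith [add_one_le_exp (-(33*a*t^3))]
  have h6 : exp (a*t) ≤ 3 := by
    calc _ ≤ exp 1 := by gcongr
      _ ≤ 3 := by linarith [exp_one_lt_d9]
  have h7 : exp (a*t) = exp (a*t/2)^2 := by rw [sq, ← exp_add]; ring_nf
  have h8 : a*t/2 ≤ exp (a*t/2) - 1 := by linarith [add_one_le_exp (a*t/2)]
  have h9 : (a*t/2)^2 ≤ (exp (a*t/2) - 1)^2 := by
    have : 0 ≤ a*t/2 := by positivity
    gcongr
  have h10 : exp (a*t) * (33*a*t^3) < (a*t/2)^2 := by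
    calc exp (a*t) * (33*a*t^3) ≤ 3 * (33*a*t^3) := by gcongr
      _ = (99 * t) * (a*t^2) := by ring
      _ < (a/4) * (a*t^2) := by gcongr; linarith
      _ = _ := by ring
  have h11 : exp (a*t/2) < (1/2) * 1 + (1/2) * exp (a*t - 33*a*t^3) := by nlinarith
  have h12 : exp (a*t/2) * A^a < ((1/2) * 1 + (1/2) * exp (a*t - 33*a*t^3)) * A^a := by gcongr
  linarith

def coneK {n : ℕ} (i : Fin n) (δ : ℝ) : Set (EuclideanSpace ℝ (Fin n)) :=
  {x | 0 ≤ x i ∧ x i ≤ 1 ∧ ‖x - x i • EuclideanSpace.single i (1:ℝ)‖ ≤ δ * x i}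

section
variable {n : ℕ} (i : Fin n) (δ : ℝ)

lemma coneK_norm (hδ1 : δ ≤ 1) {x : EuclideanSpace ℝ (Fin n)} (hx : x ∈ coneK i δ) : ‖x‖ ≤ 2 := by
  obtain ⟨h0, h1, h2⟩ := hx
  have h3 : ‖x i • EuclideanSpace.single i (1:ℝ)‖ = x i := by
    rw [norm_smul]; simp [abs_of_nonneg h0]
  have := norm_add_le (x - x i • EuclideanSpace.single i (1:ℝ)) (x i • EuclideanSpace.single i (1:ℝ))
  rw [sub_add_cancel, h3] at this
  nlinarith

lemma coneK_closed : IsClosed (coneK i δ) := by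
  unfold coneK
  simp only [ofPred_and]
  refine IsClosed.inter (isClosed_le (by fun_prop) (by fun_prop))
    (IsClosed.inter (isClosed_le (by fun_prop) (by fun_prop)) (isClosed_le (by fun_prop) (by fun_prop)))

lemma coneK_compact (hδ1 : δ ≤ 1) : IsCompact (coneK i δ) :=
  Metric.isCompact_of_isClosed_isBounded (coneK_closed i δ)
    (isBounded_iff_forall_norm_le.2 ⟨2, fun _ hx => coneK_norm i δ hδ1 hx⟩)

lemma coneK_convex : Convex ℝ (coneK i δ) := by
  rintro x ⟨hx0, hx1, hx2⟩ y ⟨hy0, hy1, hy2⟩ a b ha hb hab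
  refine ⟨?_, ?_, ?_⟩
  · simp; positivity
  · simp; nlinarith
  · have : a • x + b • y - (a • x + b • y) i • EuclideanSpace.single i (1:ℝ)
      = a • (x - x i • EuclideanSpace.single i (1:ℝ)) + b • (y - y i • EuclideanSpace.single i (1:ℝ)) := by
      simp only [PiLp.add_apply, PiLp.smul_apply, smul_eq_mul]
      module
    rw [this]
    refine (norm_add_le _ _).trans ?_
    rw [norm_smul, norm_smul, norm_of_nonneg ha, norm_of_nonneg hb]
    simp only [PiLp.add_apply, PiLp.smul_apply, smul_eq_mul]
    nlinarith [mul_le_mul_of_nonneg_left hx2 ha, mul_le_mul_of_nonneg_left hy2 hb]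

lemma coneK_mem (hδ : 0 < δ) (t : ℝ) (h0 : 0 ≤ t) (h1 : t ≤ 1) :
    t • EuclideanSpace.single i (1:ℝ) ∈ coneK i δ := by
  refine ⟨by simpa, by simpa, ?_⟩
  simp; positivity

lemma coneK_interior (hδ : 0 < δ) : (interior (coneK i δ)).Nonempty := by
  have ho : IsOpen {x : EuclideanSpace ℝ (Fin n) | 0 < x i ∧ x i < 1 ∧
      ‖x - x i • EuclideanSpace.single i (1:ℝ)‖ < δ * x i} := by
    simp only [ofPred_and]
    refine IsOpen.inter (isOpen_lt (by fun_prop) (by fun_prop))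
      (IsOpen.inter (isOpen_lt (by fun_prop) (by fun_prop)) (isOpen_lt (by fun_prop) (by fun_prop)))
  refine ⟨(1/2:ℝ) • EuclideanSpace.single i (1:ℝ), interior_maximal ?_ ho ?_⟩
  · rintro x ⟨h1, h2, h3⟩
    exact ⟨h1.le, h2.le, h3.le⟩
  · refine ⟨by simp, by simp; norm_num, ?_⟩
    simp; positivity

lemma coneK_tip {t : ℝ} (ht : 0 < t) : coneK i δ ∩ {x | x i ≤ t} ⊆ t • coneK i δ := by
  rintro x ⟨⟨h0, h1, h2⟩, h3⟩
  have h3 : x i ≤ t := h3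
  rw [mem_smul_set_iff_inv_smul_mem₀ ht.ne']
  refine ⟨?_, ?_, ?_⟩
  · simp; positivity
  · simp only [PiLp.smul_apply, smul_eq_mul]
    rw [inv_mul_le_iff₀ ht]; simpa
  · simp only [PiLp.smul_apply, smul_eq_mul]
    rw [mul_smul, ← smul_sub, norm_smul, norm_of_nonneg (by positivity)]
    calc _ ≤ t⁻¹ * (δ * x i) := by gcongr
      _ = _ := by ring

lemma coneK_ptwise {t : ℝ} (ht : 0 ≤ t) (hδ : 0 ≤ δ)
    {x : EuclideanSpace ℝ (Fin n)} (hx : x ∈ coneK i δ) :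
    exp (-δ) * (exp t * exp (-‖x‖) - (exp t - exp (-t)) * ({x | x i ≤ t} : Set _).indicator 1 x) ≤
      exp (-‖x - t • EuclideanSpace.single i (1:ℝ)‖) := by
  obtain ⟨h0, h1, h2⟩ := hx
  have h3 : ‖x - t • EuclideanSpace.single i (1:ℝ)‖ ≤ |x i - t| + δ := by
    have : x - t • EuclideanSpace.single i (1:ℝ) = (x i - t) • EuclideanSpace.single i (1:ℝ) +
      (x - x i • EuclideanSpace.single i (1:ℝ)) := by module
    rw [this]
    refine (norm_add_le _ _).trans ?_
    rw [norm_smul]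
    simp only [PiLp.norm_single, norm_one, mul_one, norm_eq_abs]
    nlinarith
  have h4 : x i ≤ ‖x‖ := (le_abs_self _).trans (PiLp.norm_apply_le x i)
  by_cases hc : x i ≤ t
  · rw [indicator_of_mem (by exact hc)]
    rw [abs_of_nonpos (by linarith)] at h3
    calc _ ≤ exp (-δ) * exp (-t) := by
          gcongr
          have : exp (-‖x‖) ≤ 1 := by simp
          simp only [Pi.one_apply]
          nlinarith [exp_pos t]
      _ = exp (-δ + -t) := by rw [exp_add]
      _ ≤ _ := by gcongr; linarith
  · rw [indicator_of_notMem (by exact hc)]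
    push Not at hc
    rw [abs_of_nonneg (by linarith)] at h3
    rw [mul_zero, sub_zero, ← exp_add, ← exp_add]
    gcongr
    linarith

lemma mu_translate (K : Set (EuclideanSpace ℝ (Fin n))) (hK : IsCompact K)
    (v : EuclideanSpace ℝ (Fin n)) :
    ((volume.withDensity (fun x : EuclideanSpace ℝ (Fin n) =>
      ENNReal.ofReal (Real.exp (-‖x‖)))) ((fun x => x + v) ⁻¹' K)).toReal
      = ∫ x in K, exp (-‖x - v‖) := by
  have hm : MeasurableSet ((fun x => x + v) ⁻¹' K) := hK.measurableSet.preimage (by fun_prop)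
  have h := (measurePreserving_add_right (volume : Measure (EuclideanSpace ℝ (Fin n))) v).setIntegral_preimage_emb
    (measurableEmbedding_addRight v) (fun y => exp (-‖y - v‖)) K
  rw [← h, withDensity_apply _ hm, integral_eq_lintegral_of_nonneg_ae]
  · simp
  · exact Filter.Eventually.of_forall fun x => (exp_pos _).le
  · exact Continuous.aestronglyMeasurable (by fun_prop)
end

lemma main_aux (n : ℕ) (hn : 2 ≤ n)
    (μ : Measure (EuclideanSpace ℝ (Fin n)))
    (hμ : μ = volume.withDensity (fun x => ENNReal.ofReal (Real.exp (-‖x‖)))) :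
    (∀ α : ℝ, 0 < α →
      ∃ K L : Set (EuclideanSpace ℝ (Fin n)),
        (IsCompact K ∧ Convex ℝ K ∧ (interior K).Nonempty ∧ 0 ∈ K) ∧
        (IsCompact L ∧ Convex ℝ L ∧ (interior L).Nonempty ∧ 0 ∈ L) ∧
        ∃ lam ∈ Set.Ioo (0 : ℝ) 1,
          (μ (lam • K + (1 - lam) • L)).toReal ^ α <
            lam * (μ K).toReal ^ α + (1 - lam) * (μ L).toReal ^ α) := by
  intro a ha
  obtain ⟨t, ht0, ht1, H⟩ := aux_num a ha
  let i : Fin n := ⟨0, by omega⟩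
  let e : EuclideanSpace ℝ (Fin n) := EuclideanSpace.single i (1:ℝ)
  have he : ‖e‖ = 1 := by simp [e]
  obtain ⟨δ, hδ⟩ : ∃ δ, δ = t^3 := ⟨_, rfl⟩
  have hδ0 : 0 < δ := by rw [hδ]; positivity
  have hδ1 : δ ≤ 1 := by rw [hδ]; exact pow_le_one₀ ht0.le (by linarith)
  let K := coneK i δ
  have hKc : IsCompact K := coneK_compact i δ hδ1
  have hKv : Convex ℝ K := coneK_convex i δ
  have hKi : (interior K).Nonempty := coneK_interior i δ hδ0
  have hmem : ∀ s : ℝ, 0 ≤ s → s ≤ 1 → s • e ∈ K := coneK_mem i δ hδ0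
  let S : EuclideanSpace ℝ (Fin n) → Set (EuclideanSpace ℝ (Fin n)) := fun v => (fun x => x + v) ⁻¹' K
  have hScomp : ∀ v, IsCompact (S v) := fun v => (Homeomorph.addRight v).isCompact_preimage.2 hKc
  have hfin : ∀ v, μ (S v) ≠ ⊤ := by
    intro v
    have : IsLocallyFiniteMeasure μ := by
      rw [hμ]
      exact IsLocallyFiniteMeasure.withDensity_ofReal (by fun_prop)
    exact (hScomp v).measure_lt_top.ne
  have hS : ∀ v, (μ (S v)).toReal = ∫ x in K, exp (-‖x - v‖) := by
    intro v; rw [hμ]; exact mu_translate K hKc v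
  have hint : ∀ f : EuclideanSpace ℝ (Fin n) → ℝ, Continuous f → IntegrableOn f K volume :=
    fun f hf => hf.continuousOn.integrableOn_compact hKc
  have hK0 : S 0 = K := by simp [S]
  refine ⟨K, S (t • e), ⟨hKc, hKv, hKi, ?_⟩, ⟨hScomp _, ?_, ?_, ?_⟩, 1/2, by norm_num, ?_⟩
  · simpa using hmem 0 le_rfl zero_le_one
  · exact hKv.translate_preimage_left _
  · have := (Homeomorph.addRight (t • e)).preimage_interior K
    have h2 : interior (S (t • e)) = (fun x => x + t • e) ⁻¹' interior K := this.symm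
    rw [h2]
    obtain ⟨y, hy⟩ := hKi
    exact ⟨y - t • e, by simpa using hy⟩
  · simpa [S] using hmem t ht0.le (by linarith)
  have hsub : (1/2:ℝ) • K + (1 - 1/2 : ℝ) • S (t • e) ⊆ S ((t/2) • e) := by
    rintro _ ⟨_, ⟨x, hx, rfl⟩, _, ⟨y, hy, rfl⟩, rfl⟩
    have := hKv hx hy (by norm_num : (0:ℝ) ≤ 1/2) (by norm_num : (0:ℝ) ≤ 1 - 1/2) (by norm_num)
    show _ + _ ∈ K
    convert this using 1
    simp only
    module
  have hvol : 0 < volume.real K := by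
    rw [measureReal_def]
    refine ENNReal.toReal_pos ?_ hKc.measure_lt_top.ne
    exact (Measure.measure_pos_of_nonempty_interior _ hKi).ne'
  have hM : volume.real K ≤ exp 2 * (μ K).toReal := by
    have h1 : ∫ x in K, exp (-2) ≤ ∫ x in K, exp (-‖x - 0‖) := by
      refine setIntegral_mono_on (hint _ (by fun_prop)) (hint _ (by fun_prop)) hKc.measurableSet ?_
      intro x hx
      rw [sub_zero]
      gcongr
      exact coneK_norm i δ hδ1 hx
    rw [← hS, hK0, setIntegral_const, smul_eq_mul, exp_neg] at h1
    have := exp_pos 2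
    rwa [← div_eq_mul_inv, div_le_iff₀ this, mul_comm] at h1
  refine H _ _ _ ?_ ENNReal.toReal_nonneg ?_ ?_
  · by_contra hc
    nlinarith [exp_pos 2]
  · calc _ ≤ (μ (S ((t/2) • e))).toReal := ENNReal.toReal_mono (hfin _) (measure_mono hsub)
      _ = ∫ x in K, exp (-‖x - (t/2) • e‖) := hS _
      _ ≤ ∫ x in K, exp (t/2) * exp (-‖x - 0‖) := by
        refine setIntegral_mono_on (hint _ (by fun_prop)) (hint _ (by fun_prop)) hKc.measurableSet ?_
        intro x hx
        rw [← exp_add, sub_zero]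
        gcongr
        have := norm_sub_norm_le x ((t/2) • e)
        rw [norm_smul, he, norm_of_nonneg (by positivity)] at this
        linarith
      _ = _ := by rw [integral_const_mul, ← hS, hK0]
  · have hms : MeasurableSet {x : EuclideanSpace ℝ (Fin n) | x i ≤ t} :=
      (isClosed_le (by fun_prop) (by fun_prop)).measurableSet
    have hintind : IntegrableOn (({x : EuclideanSpace ℝ (Fin n) | x i ≤ t}).indicator (1 : EuclideanSpace ℝ (Fin n) → ℝ)) K volume :=
      (hint 1 (by fun_prop)).indicator hms
    have hT : ∫ x in K, ({x : EuclideanSpace ℝ (Fin n) | x i ≤ t}).indicator (1 : EuclideanSpace ℝ (Fin n) → ℝ) x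
        ≤ t^2 * (exp 2 * (μ K).toReal) := by
      rw [integral_indicator_one hms, measureReal_restrict_apply hms, inter_comm]
      calc _ ≤ volume.real (t • K) := by
            refine measureReal_mono (coneK_tip i δ ht0) ?_
            exact (hKc.smul t).measure_lt_top.ne
        _ = t^n * volume.real K := by
            rw [measureReal_def, Measure.addHaar_smul, ENNReal.toReal_mul, measureReal_def]
            simp [abs_of_pos ht0, (pow_pos ht0 n).le]
        _ ≤ t^2 * volume.real K := by
            gcongr ?_ * _
            exact pow_le_pow_of_le_one ht0.le (by linarith) hn
        _ ≤ _ := by gcongr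
    have het : 0 ≤ exp t - exp (-t) := by
      rw [sub_nonneg]; gcongr; linarith
    calc _ ≤ exp (-t^3) * (exp t * (μ K).toReal - (exp t - exp (-t)) *
          ∫ x in K, ({x : EuclideanSpace ℝ (Fin n) | x i ≤ t}).indicator (1 : EuclideanSpace ℝ (Fin n) → ℝ) x) := by gcongr
      _ = ∫ x in K, exp (-δ) * (exp t * exp (-‖x‖) - (exp t - exp (-t)) *
            ({x : EuclideanSpace ℝ (Fin n) | x i ≤ t}).indicator (1 : EuclideanSpace ℝ (Fin n) → ℝ) x) := by
        rw [integral_const_mul, integral_sub (hint _ (by fun_prop)) (hintind.const_mul _), integral_const_mul,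
          integral_const_mul, hδ]
        have := hS 0
        rw [hK0] at this
        simp only [sub_zero] at this
        rw [this]
      _ ≤ ∫ x in K, exp (-‖x - t • e‖) := by
        refine setIntegral_mono_on ?_ (hint _ (by fun_prop)) hKc.measurableSet ?_
        · exact ((hint (fun x => exp t * exp (-‖x‖)) (by fun_prop)).sub (hintind.const_mul _)).const_mul _
        · intro x hx
          exact coneK_ptwise i δ ht0.le hδ0.le hx
      _ = _ := (hS _).symm

theorem stmt_2 (n : ℕ) (hn : 2 ≤ n)
    (μ : Measure (EuclideanSpace ℝ (Fin n)))
    (hμ : μ = volume.withDensity (fun x => ENNReal.ofReal (Real.exp (-‖x‖)))) :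
    (∀ α : ℝ, 0 < α →
      ∃ K L : Set (EuclideanSpace ℝ (Fin n)),
        (IsCompact K ∧ Convex ℝ K ∧ (interior K).Nonempty ∧ 0 ∈ K) ∧
        (IsCompact L ∧ Convex ℝ L ∧ (interior L).Nonempty ∧ 0 ∈ L) ∧
        ∃ lam ∈ Set.Ioo (0 : ℝ) 1,
          (μ (lam • K + (1 - lam) • L)).toReal ^ α <
            lam * (μ K).toReal ^ α + (1 - lam) * (μ L).toReal ^ α) ∧
    ¬ ∃ α : ℝ, 0 < α ∧
        ∀ K L : Set (EuclideanSpace ℝ (Fin n)),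
          (IsCompact K ∧ Convex ℝ K ∧ (interior K).Nonempty ∧ 0 ∈ K) →
          (IsCompact L ∧ Convex ℝ L ∧ (interior L).Nonempty ∧ 0 ∈ L) →
          ∀ lam ∈ Set.Icc (0 : ℝ) 1,
            lam * (μ K).toReal ^ α + (1 - lam) * (μ L).toReal ^ α ≤
              (μ (lam • K + (1 - lam) • L)).toReal ^ α := by
  have h := main_aux n hn μ hμ
  refine ⟨h, ?_⟩
  rintro ⟨a, ha, H⟩
  obtain ⟨K, L, hK, hL, lam, hl, hlt⟩ := h a ha
  exact absurd (H K L hK hL lam (Ioo_subset_Icc_self hl)) (not_le.2 hlt)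
end

section
/- Let V : ℝⁿ → ℝ (n ≥ 2) be continuous and let μ be the measure with density e^{-V} with respect to the Lebesgue measure; assume μ is finite. Let F : ℝⁿ → (0, ∞) be continuous. Then inf over all convex bodies K in ℝⁿ containing the origin of (1/μ(K)) ∫_K F dμ equals inf over θ in the unit sphere S^{n-1} of inf over R > 0 of (∫_0^R F(rθ) r^{n-1} e^{-V(rθ)} dr) / (∫_0^R r^{n-1} e^{-V(rθ)} dr). -/
open MeasureTheory Real Set

theorem polar_nonneg {n : ℕ} (hn : 2 ≤ n) (f : EuclideanSpace ℝ (Fin n) → ℝ)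
    (h : ∀ θ : EuclideanSpace ℝ (Fin n), ‖θ‖ = 1 →
      0 ≤ ∫ r in Ioi (0 : ℝ), r ^ (n - 1) * f (r • θ)) : 0 ≤ ∫ x, f x := by
  haveI : Nonempty (Fin n) := ⟨⟨0, by omega⟩⟩
  have hdim : Module.finrank ℝ (EuclideanSpace ℝ (Fin n)) = n := by simp
  set μ : Measure (EuclideanSpace ℝ (Fin n)) := volume
  have e1 : ∫ x, f x ∂μ =
      ∫ x : ({(0)}ᶜ : Set (EuclideanSpace ℝ (Fin n))), f x.1 ∂(μ.comap (↑)) := by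
    rw [integral_subtype_comap (measurableSet_singleton _).compl fun x ↦ f x,
        restrict_compl_singleton]
  have e2 := μ.measurePreserving_homeomorphUnitSphereProd.integral_comp
        (Homeomorph.measurableEmbedding _)
        (fun p : Metric.sphere (0 : EuclideanSpace ℝ (Fin n)) 1 × Ioi (0:ℝ) => f (p.2.1 • p.1.1))
  have e3 : ∀ x : ({(0)}ᶜ : Set (EuclideanSpace ℝ (Fin n))),
      ((homeomorphUnitSphereProd (EuclideanSpace ℝ (Fin n))) x).2.1 •
      ((homeomorphUnitSphereProd (EuclideanSpace ℝ (Fin n))) x).1.1 = x.1 := by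
    intro x
    have hx : ‖x.1‖ ≠ 0 := norm_ne_zero_iff.2 x.2
    simp [smul_smul, hx]
  simp only [e3] at e2
  rw [e1, e2]
  by_cases hi : Integrable (fun p : Metric.sphere (0 : EuclideanSpace ℝ (Fin n)) 1 × Ioi (0:ℝ) =>
      f (p.2.1 • p.1.1)) (μ.toSphere.prod
        (Measure.volumeIoiPow (Module.finrank ℝ (EuclideanSpace ℝ (Fin n)) - 1)))
  · rw [integral_prod _ hi]
    refine integral_nonneg fun θ => ?_
    have := h θ.1 (by simpa using θ.2)
    simp only [Measure.volumeIoiPow, ENNReal.ofReal]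
    rw [integral_withDensity_eq_integral_smul,
        integral_subtype_comap measurableSet_Ioi
          fun a ↦ Real.toNNReal (a ^ (Module.finrank ℝ (EuclideanSpace ℝ (Fin n)) - 1)) •
            f (a • θ.1),
        setIntegral_congr_fun measurableSet_Ioi fun x hx ↦ ?_]
    · exact this
    · simp only [hdim]
      rw [NNReal.smul_def, Real.coe_toNNReal _ (pow_nonneg (le_of_lt hx) _), smul_eq_mul]
    · exact (measurable_subtype_coe.pow_const _).real_toNNReal
  · rw [integral_undef hi]

theorem ray_lemma {n : ℕ} {K : Set (EuclideanSpace ℝ (Fin n))} (hK : IsCompact K)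
    (hc : Convex ℝ K) (h0 : 0 ∈ K) {θ : EuclideanSpace ℝ (Fin n)} (hθ : ‖θ‖ = 1) :
    (∀ r : ℝ, 0 < r → r • θ ∉ K) ∨
      ∃ R : ℝ, 0 < R ∧ ∀ r : ℝ, 0 < r → (r • θ ∈ K ↔ r ≤ R) := by
  by_cases h : ∃ r : ℝ, 0 < r ∧ r • θ ∈ K
  · right
    obtain ⟨r0, hr0, hr0K⟩ := h
    obtain ⟨B, hB⟩ := hK.isBounded.exists_norm_le
    have hcl : IsClosed {r : ℝ | r • θ ∈ K} :=
      hK.isClosed.preimage (by fun_prop : Continuous fun r : ℝ => r • θ)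
    have hbd : BddAbove {r : ℝ | r • θ ∈ K} := by
      refine ⟨B, fun r hr => ?_⟩
      have := hB _ hr
      rw [norm_smul, hθ, mul_one] at this
      exact (le_abs_self r).trans this
    have hm := hcl.csSup_mem ⟨r0, hr0K⟩ hbd
    have hle : r0 ≤ sSup {r : ℝ | r • θ ∈ K} := le_csSup hbd hr0K
    refine ⟨sSup {r : ℝ | r • θ ∈ K}, by linarith, fun r hr => ⟨fun h => le_csSup hbd h, fun h => ?_⟩⟩
    set R := sSup {r : ℝ | r • θ ∈ K}
    have hR : 0 < R := by linarith
    have := hc.smul_mem_of_zero_mem h0 hm (t := r / R)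
      ⟨by positivity, by rw [div_le_one hR]; exact h⟩
    rwa [smul_smul, div_mul_cancel₀ _ hR.ne'] at this
  · left
    push Not at h
    exact h

theorem body_nonneg {n : ℕ} (hn : 2 ≤ n) {K : Set (EuclideanSpace ℝ (Fin n))} (hK : IsCompact K)
    (hc : Convex ℝ K) (h0 : 0 ∈ K) (g : EuclideanSpace ℝ (Fin n) → ℝ)
    (h : ∀ θ : EuclideanSpace ℝ (Fin n), ‖θ‖ = 1 → ∀ R : ℝ, 0 < R →
      (∀ r : ℝ, 0 < r → (r • θ ∈ K ↔ r ≤ R)) →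
      0 ≤ ∫ r in Ioo (0 : ℝ) R, r ^ (n - 1) * g (r • θ)) : 0 ≤ ∫ x in K, g x := by
  rw [← integral_indicator hK.isClosed.measurableSet]
  refine polar_nonneg hn _ fun θ hθ => ?_
  rcases ray_lemma hK hc h0 hθ with h1 | ⟨R, hR, h1⟩
  · refine (setIntegral_eq_zero_of_forall_eq_zero fun r hr => ?_).ge
    simp [h1 r hr]
  · have h2 := h θ hθ R hR h1
    rw [← integral_Ioc_eq_integral_Ioo] at h2
    convert h2 using 1
    rw [← integral_indicator measurableSet_Ioi, ← integral_indicator measurableSet_Ioc]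
    congr 1
    ext r
    by_cases hr : 0 < r
    · by_cases hrR : r ≤ R
      · have := (h1 r hr).2 hrR
        simp [hr, hrR, this]
      · have : r • θ ∉ K := fun h => hrR ((h1 r hr).1 h)
        simp [hr, hrR, this]
    · simp [hr]

theorem cone_body {n : ℕ} {θ : EuclideanSpace ℝ (Fin n)} (hθ : ‖θ‖ = 1) {R : ℝ} (hR : 0 < R)
    {c : ℝ} (hc0 : 0 ≤ c) (hc1 : c < 1) :
    let K := {x : EuclideanSpace ℝ (Fin n) | c * ‖x‖ ≤ inner ℝ θ x} ∩ Metric.closedBall 0 R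
    IsCompact K ∧ Convex ℝ K ∧ (interior K).Nonempty ∧ 0 ∈ K := by
  intro K
  refine ⟨?_, ?_, ?_, ?_⟩
  · refine (isCompact_closedBall _ _).inter_left ?_
    exact isClosed_le (by fun_prop) (by fun_prop)
  · refine Convex.inter ?_ (convex_closedBall _ _)
    intro x hx y hy a b ha hb hab
    simp only [mem_ofPred_eq] at hx hy ⊢
    rw [inner_add_right, inner_smul_right, inner_smul_right]
    have h1 : ‖a • x + b • y‖ ≤ a * ‖x‖ + b * ‖y‖ := by
      refine (norm_add_le _ _).trans ?_
      rw [norm_smul, norm_smul, Real.norm_of_nonneg ha, Real.norm_of_nonneg hb]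
    nlinarith [mul_le_mul_of_nonneg_left h1 hc0, mul_le_mul_of_nonneg_left hx ha,
      mul_le_mul_of_nonneg_left hy hb]
  · have hsub : {x : EuclideanSpace ℝ (Fin n) | c * ‖x‖ < inner ℝ θ x} ∩ Metric.ball 0 R ⊆
        interior K := by
      refine interior_maximal ?_ ?_
      · exact inter_subset_inter (fun x hx => by
          simp only [mem_ofPred_eq] at hx ⊢; exact hx.le) Metric.ball_subset_closedBall
      · exact (isOpen_lt (by fun_prop) (by fun_prop)).inter Metric.isOpen_ball
    refine ⟨(R / 2) • θ, hsub ⟨?_, ?_⟩⟩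
    · simp only [mem_ofPred_eq]
      rw [norm_smul, inner_smul_right, real_inner_self_eq_norm_sq, hθ,
        Real.norm_of_nonneg (by positivity)]
      nlinarith
    · rw [mem_ball_zero_iff, norm_smul, hθ, Real.norm_of_nonneg (by positivity)]
      linarith
  · simp [K, hR.le]

theorem int_Ioo {f : ℝ → ℝ} (hf : Continuous f) (R : ℝ) : IntegrableOn f (Ioo (0 : ℝ) R) :=
  (hf.integrableOn_Icc (a := 0) (b := R)).mono_set Ioo_subset_Icc_self

theorem den_pos {f : ℝ → ℝ} (hf : Continuous f) {R : ℝ} (hR : 0 < R)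
    (hp : ∀ r, 0 < r → 0 < f r) : 0 < ∫ r in Ioo (0 : ℝ) R, f r := by
  rw [← integral_Ioc_eq_integral_Ioo, ← intervalIntegral.integral_of_le hR.le]
  exact intervalIntegral.intervalIntegral_pos_of_pos_on (hf.intervalIntegrable _ _)
    (fun x hx => hp x hx.1) hR

theorem stmt_4 (n : ℕ) (hn : 2 ≤ n)
    (V : EuclideanSpace ℝ (Fin n) → ℝ) (hV : Continuous V)
    (μ : Measure (EuclideanSpace ℝ (Fin n)))
    (hμ : μ = volume.withDensity (fun x => ENNReal.ofReal (Real.exp (-V x))))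
    (hfin : IsFiniteMeasure μ)
    (F : EuclideanSpace ℝ (Fin n) → ℝ) (hF : Continuous F) (hFpos : ∀ x, 0 < F x) :
    sInf ((fun K => (μ K).toReal⁻¹ * ∫ x in K, F x ∂μ) ''
        {K : Set (EuclideanSpace ℝ (Fin n)) |
          IsCompact K ∧ Convex ℝ K ∧ (interior K).Nonempty ∧ 0 ∈ K}) =
    sInf {y : ℝ | ∃ θ : EuclideanSpace ℝ (Fin n), ‖θ‖ = 1 ∧ ∃ R : ℝ, 0 < R ∧
        y = (∫ r in Set.Ioo (0 : ℝ) R, F (r • θ) * r ^ (n - 1) * Real.exp (-V (r • θ))) /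
            (∫ r in Set.Ioo (0 : ℝ) R, r ^ (n - 1) * Real.exp (-V (r • θ)))} := by
  haveI : Nonempty (Fin n) := ⟨⟨0, by omega⟩⟩
  -- integrals over bodies
  have hint : ∀ K : Set (EuclideanSpace ℝ (Fin n)), IsCompact K → ∀ f : EuclideanSpace ℝ (Fin n) → ℝ,
      ∫ x in K, f x ∂μ = ∫ x in K, Real.exp (-V x) * f x := by
    intro K hK f
    rw [hμ, setIntegral_withDensity_eq_setIntegral_toReal_smul (by fun_prop) (by simp) _
      hK.isClosed.measurableSet]
    simp [ENNReal.toReal_ofReal, Real.exp_nonneg]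
  have hmeas : ∀ K : Set (EuclideanSpace ℝ (Fin n)), IsCompact K →
      (μ K).toReal = ∫ x in K, Real.exp (-V x) := by
    intro K hK
    have := hint K hK (fun _ => 1)
    simpa [Measure.real] using this
  have hKpos : ∀ K : Set (EuclideanSpace ℝ (Fin n)), (interior K).Nonempty → 0 < (μ K).toReal := by
    intro K hK
    refine ENNReal.toReal_pos ?_ (measure_ne_top _ _)
    intro h
    have hac : volume ≪ μ := by
      rw [hμ]
      refine withDensity_absolutelyContinuous' (by fun_prop) ?_
      exact Filter.Eventually.of_forall fun x => by simp [Real.exp_pos]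
    have := measure_mono_null interior_subset (hac h)
    exact (isOpen_interior.measure_pos volume hK).ne' this
  have hsub : ∀ K : Set (EuclideanSpace ℝ (Fin n)), IsCompact K → ∀ m : ℝ,
      ∫ x in K, Real.exp (-V x) * (F x - m) = (∫ x in K, F x ∂μ) - m * (μ K).toReal := by
    intro K hK m
    rw [hint K hK, hmeas K hK, ← integral_const_mul, ← integral_sub]
    · congr 1; ext x; ring
    · exact ContinuousOn.integrableOn_compact hK (by fun_prop)
    · exact ContinuousOn.integrableOn_compact hK (by fun_prop)
  have hden : ∀ θ : EuclideanSpace ℝ (Fin n), ∀ R : ℝ, 0 < R →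
      0 < ∫ r in Set.Ioo (0 : ℝ) R, r ^ (n - 1) * Real.exp (-V (r • θ)) := by
    intro θ R hR
    exact den_pos (by fun_prop) hR fun r hr => by positivity
  have hnum : ∀ θ : EuclideanSpace ℝ (Fin n), ∀ R : ℝ, 0 < R →
      0 < ∫ r in Set.Ioo (0 : ℝ) R, F (r • θ) * r ^ (n - 1) * Real.exp (-V (r • θ)) := by
    intro θ R hR
    refine den_pos (by fun_prop) hR fun r hr => ?_
    have := hFpos (r • θ)
    positivity
  have hray : ∀ θ : EuclideanSpace ℝ (Fin n), ∀ R : ℝ, ∀ m : ℝ,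
      ∫ r in Set.Ioo (0 : ℝ) R, r ^ (n - 1) * (Real.exp (-V (r • θ)) * (F (r • θ) - m)) =
      (∫ r in Set.Ioo (0 : ℝ) R, F (r • θ) * r ^ (n - 1) * Real.exp (-V (r • θ))) -
      m * ∫ r in Set.Ioo (0 : ℝ) R, r ^ (n - 1) * Real.exp (-V (r • θ)) := by
    intro θ R m
    rw [← integral_const_mul, ← integral_sub]
    · congr 1; ext x; ring
    · exact int_Ioo (by fun_prop) R
    · exact int_Ioo (by fun_prop) R
  have e0 : ∃ θ : EuclideanSpace ℝ (Fin n), ‖θ‖ = 1 := exists_norm_eq _ zero_le_one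
  apply le_antisymm
  · obtain ⟨θ0, hθ0⟩ := e0
    refine le_csInf ⟨_, θ0, hθ0, 1, one_pos, rfl⟩ ?_
    rintro y ⟨θ, hθ, R, hR, rfl⟩
    refine le_of_forall_gt_imp_ge_of_dense fun M hM => ?_
    rw [div_lt_iff₀ (hden θ R hR)] at hM
    let G : EuclideanSpace ℝ (Fin n) → ℝ := fun φ =>
      ∫ r in (0 : ℝ)..R, r ^ (n - 1) * (Real.exp (-V (r • φ)) * (F (r • φ) - M))
    have hG : Continuous G :=
      intervalIntegral.continuous_parametric_intervalIntegral_of_continuous' (by fun_prop) _ _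
    have hGe : ∀ φ, G φ =
        ∫ r in Set.Ioo (0 : ℝ) R, r ^ (n - 1) * (Real.exp (-V (r • φ)) * (F (r • φ) - M)) := by
      intro φ
      rw [← integral_Ioc_eq_integral_Ioo, ← intervalIntegral.integral_of_le hR.le]
    have hGθ : G θ < 0 := by rw [hGe, hray]; linarith
    obtain ⟨δ, hδ, hball⟩ := Metric.isOpen_iff.1 (isOpen_lt hG continuous_const) θ hGθ
    set d := min δ 1
    have hd : 0 < d := lt_min hδ one_pos
    have hd1 : d ≤ 1 := min_le_right _ _
    have hdδ : d ≤ δ := min_le_left _ _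
    set c := 1 - d ^ 2 / 4
    have hc0 : 0 ≤ c := by simp only [c]; nlinarith
    have hc1 : c < 1 := by simp only [c]; nlinarith
    have hb := cone_body hθ hR hc0 hc1
    set K := {x : EuclideanSpace ℝ (Fin n) | c * ‖x‖ ≤ inner ℝ θ x} ∩ Metric.closedBall 0 R with hKd
    obtain ⟨hK, hKc, hKi, hK0⟩ := hb
    have hKmem : K ∈ {K : Set (EuclideanSpace ℝ (Fin n)) |
          IsCompact K ∧ Convex ℝ K ∧ (interior K).Nonempty ∧ 0 ∈ K} := ⟨hK, hKc, hKi, hK0⟩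
    refine le_trans (csInf_le ⟨0, ?_⟩ (mem_image_of_mem _ hKmem)) ?_
    · rintro _ ⟨K, -, rfl⟩
      exact mul_nonneg (by positivity) (integral_nonneg fun x => (hFpos x).le)
    · have key : 0 ≤ ∫ x in K, -(Real.exp (-V x) * (F x - M)) := by
        refine body_nonneg hn hK hKc hK0 _ fun φ hφ R' hR' hiff => ?_
        have h1 : c ≤ inner ℝ θ φ := by
          have := ((hiff R' hR').2 le_rfl).1
          simp only [mem_ofPred_eq] at this
          rw [norm_smul, inner_smul_right, hφ, Real.norm_of_nonneg hR'.le] at this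
          nlinarith
        have hmem : ∀ r : ℝ, 0 < r → (r • φ ∈ K ↔ r ≤ R) := by
          intro r hr
          have hrc := mul_le_mul_of_nonneg_left h1 hr.le
          simp only [hKd, mem_inter_iff, mem_ofPred_eq, mem_closedBall_zero_iff, norm_smul,
            inner_smul_right, hφ, Real.norm_of_nonneg hr.le, mul_one]
          constructor
          · exact fun h => h.2
          · exact fun h => ⟨by linarith, h⟩
        have hRR : R' = R := le_antisymm ((hmem R' hR').1 ((hiff R' hR').2 le_rfl))
          ((hiff R hR).1 ((hmem R hR).2 le_rfl))
        subst hRR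
        have h2 : G φ < 0 := by
          refine hball ?_
          rw [mem_ball_iff_norm]
          have h3 : ‖φ - θ‖ ^ 2 < d ^ 2 := by
            rw [norm_sub_sq_real, hφ, hθ, real_inner_comm]
            simp only [c] at h1
            nlinarith
          exact (lt_of_pow_lt_pow_left₀ 2 hd.le h3).trans_le hdδ
        rw [hGe] at h2
        simp only [mul_neg, integral_neg]
        linarith
      rw [integral_neg, hsub K hK] at key
      show (μ K).toReal⁻¹ * ∫ x in K, F x ∂μ ≤ M
      rw [inv_mul_le_iff₀ (hKpos K hKi)]
      linarith
  · obtain ⟨θ0, hθ0⟩ := e0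
    refine le_csInf ⟨_, _, cone_body hθ0 one_pos le_rfl one_pos, rfl⟩ ?_
    rintro _ ⟨K, ⟨hK, hKc, hKi, hK0⟩, rfl⟩
    set m := sInf {y : ℝ | ∃ θ : EuclideanSpace ℝ (Fin n), ‖θ‖ = 1 ∧ ∃ R : ℝ, 0 < R ∧
        y = (∫ r in Set.Ioo (0 : ℝ) R, F (r • θ) * r ^ (n - 1) * Real.exp (-V (r • θ))) /
            (∫ r in Set.Ioo (0 : ℝ) R, r ^ (n - 1) * Real.exp (-V (r • θ)))} with hm
    have key : 0 ≤ ∫ x in K, (Real.exp (-V x) * (F x - m)) := by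
      refine body_nonneg hn hK hKc hK0 _ fun φ hφ R hR _ => ?_
      rw [hray, sub_nonneg, ← le_div_iff₀ (hden φ R hR), hm]
      refine csInf_le ⟨0, ?_⟩ ⟨φ, hφ, R, hR, rfl⟩
      rintro _ ⟨φ, hφ, R, hR, rfl⟩
      exact (div_pos (hnum φ R hR) (hden φ R hR)).le
    rw [hsub K hK] at key
    show m ≤ (μ K).toReal⁻¹ * ∫ x in K, F x ∂μ
    rw [le_inv_mul_iff₀ (hKpos K hKi)]
    linarith
end
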